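/- arXiv:1405.6127 — 2 statements merged into one kernel-verified Lean document; each statement's English description precedes it below -/
import Mathlib

section
/- Let f ∈ L¹(ℝⁿ, ℝⁿ) be of the form f(x) = (x/|x|) g(|x|) for some function g. Then there is a continuous function h : [0,∞) → ℝ with h(0) = 0 and h(t) → 0 as t → ∞ such that the Fourier transform of f satisfies f̂(ξ) = i (ξ/|ξ|) h(|ξ|) for all ξ ∈ ℝⁿ. -/
open MeasureTheory Metric Filter Set
open scoped ENNReal NNReal RealInnerProductSpace FourierTransform Topology

noncomputable section

/-- `ℝⁿ` as a Euclidean space. -/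
abbrev Eucl (n : ℕ) := EuclideanSpace ℝ (Fin n)

/-- `ω_n`, the volume of the unit ball in `ℝⁿ`. -/
def ballVol (n : ℕ) : ℝ := ((volume : Measure (Eucl n)) (ball 0 1)).toReal

/-- A measure on the unit sphere of `ℝⁿ` (the cone measure, which is proportional to the
`(n-1)`-dimensional surface measure). -/
def sphereMeasure (n : ℕ) : Measure (Eucl n) :=
  Measure.map (fun x : Eucl n => ‖x‖⁻¹ • x)
    ((volume : Measure (Eucl n)).restrict (ball 0 1 \ {0}))

/-- The average `f_{S(x,t)}` of `f` over the sphere `S(x,t)` with respect to the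
`(n-1)`-dimensional surface measure. -/
def sphereAvg (n : ℕ) (f : Eucl n → ℝ) (x : Eucl n) (t : ℝ) : ℝ :=
  ⨍ z, f (x + t • z) ∂(sphereMeasure n)

/-- The average `f_{B(x,t)}` of `f` over the ball `B(x,t)` with respect to Lebesgue measure. -/
def ballAvg (n : ℕ) (f : Eucl n → ℝ) (x : Eucl n) (t : ℝ) : ℝ :=
  ⨍ y in ball x t, f y

/-- `F` is the weak (distributional) gradient of `f`. -/
def HasWeakGradient (n : ℕ) (f : Eucl n → ℝ) (F : Eucl n → Eucl n) : Prop :=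
  ∀ φ : Eucl n → ℝ, ContDiff ℝ (⊤ : ℕ∞) φ → HasCompactSupport φ →
    ∀ v : Eucl n, ∫ x, f x * fderiv ℝ φ x v = - ∫ x, ⟪F x, v⟫ * φ x

/-- `f ∈ W^{1,1}_loc(ℝⁿ)` with weak gradient `F`. -/
def MemW11loc (n : ℕ) (f : Eucl n → ℝ) (F : Eucl n → Eucl n) : Prop :=
  LocallyIntegrable f volume ∧ LocallyIntegrable F volume ∧ HasWeakGradient n f F

/-- The square function `Tf` (with spherical averages), as an `ℝ≥0∞`-valued function. -/
def Tsq (n : ℕ) (f : Eucl n → ℝ) (x : Eucl n) : ℝ≥0∞ :=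
  (∫⁻ t in Ioi (0:ℝ), ENNReal.ofReal ((f x - sphereAvg n f x t) ^ 2 / t ^ 3)) ^ (1/2 : ℝ)

/-- The square function `Sf` (with ball averages), as an `ℝ≥0∞`-valued function. -/
def Ssq (n : ℕ) (f : Eucl n → ℝ) (x : Eucl n) : ℝ≥0∞ :=
  (∫⁻ t in Ioi (0:ℝ), ENNReal.ofReal ((f x - ballAvg n f x t) ^ 2 / t ^ 3)) ^ (1/2 : ℝ)

/-- The kernel `φ(x) = (1/(nω_n)) (x/|x|ⁿ) χ_{B(0,1)}(x)`. -/
def phiK (n : ℕ) (x : Eucl n) : Eucl n :=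
  if ‖x‖ < 1 then (((n : ℝ) * ballVol n)⁻¹ * (‖x‖ ^ n)⁻¹) • x else 0

/-- The kernel `η(x) = (1/(nω_n)) x χ_{B(0,1)}(x)`. -/
def etaK (n : ℕ) (x : Eucl n) : Eucl n :=
  if ‖x‖ < 1 then ((n : ℝ) * ballVol n)⁻¹ • x else 0

/-- The kernel `ψ(x) = (1/(nω_n)) (x/|x|ⁿ - x) χ_{B(0,1)}(x) = φ(x) - η(x)`. -/
def psiK (n : ℕ) (x : Eucl n) : Eucl n := phiK n x - etaK n x

/-- The dilation `K_t(x) = t^{-n} K(x/t)` of a kernel. -/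
def dil (n : ℕ) (K : Eucl n → Eucl n) (t : ℝ) (x : Eucl n) : Eucl n :=
  (t ^ n)⁻¹ • K (t⁻¹ • x)

/-- `φ_t(x) = t^{-n} φ(x/t)`. -/
def phit (n : ℕ) (t : ℝ) (x : Eucl n) : Eucl n := dil n (phiK n) t x

/-- `ψ_t(x) = t^{-n} ψ(x/t)`. -/
def psit (n : ℕ) (t : ℝ) (x : Eucl n) : Eucl n := dil n (psiK n) t x

/-- The square function `T̃` applied to a vector field `G` (which plays the role of `Rg`):
`(∫₀^∞ |(φ_t * G)(x)|² dt/t)^{1/2}`, as an `ℝ≥0∞`-valued function. -/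
def TtilSq (n : ℕ) (G : Eucl n → Eucl n) (x : Eucl n) : ℝ≥0∞ :=
  (∫⁻ t in Ioi (0:ℝ), ENNReal.ofReal ((∫ y, ⟪phit n t y, G (x - y)⟫) ^ 2 / t)) ^ (1/2 : ℝ)

/-- The square function `S̃` applied to a vector field `G`. -/
def StilSq (n : ℕ) (G : Eucl n → Eucl n) (x : Eucl n) : ℝ≥0∞ :=
  (∫⁻ t in Ioi (0:ℝ), ENNReal.ofReal ((∫ y, ⟪psit n t y, G (x - y)⟫) ^ 2 / t)) ^ (1/2 : ℝ)

/-- The `j`-th Riesz transform of a (Schwartz-class or integrable) function, defined via the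
Fourier multiplier `-i ξ_j/|ξ|`:  `R_j φ = (-i (ξ_j/|ξ|) φ̂(ξ))^∨`. -/
def rieszOne (n : ℕ) (j : Fin n) (φ : Eucl n → ℝ) (x : Eucl n) : ℝ :=
  (𝓕⁻ (fun ξ : Eucl n => (-Complex.I) * ((ξ j / ‖ξ‖ : ℝ) : ℂ)
      * 𝓕 (fun y : Eucl n => ((φ y : ℝ) : ℂ)) ξ) x).re

/-- `G = Rg` is the (vector valued) Riesz transform of `g`, characterized by duality against
Schwartz functions (the transpose of `R_j` is `-R_j`). -/
def IsRiesz (n : ℕ) (g : Eucl n → ℝ) (G : Eucl n → Eucl n) : Prop :=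
  LocallyIntegrable G volume ∧
    ∀ (j : Fin n) (φ : SchwartzMap (Eucl n) ℝ),
      ∫ x, G x j * φ x = - ∫ x, g x * rieszOne n j (⇑φ) x

/-- The fractional Laplacian `(-Δ)^{1/2} φ = (2π|ξ| φ̂(ξ))^∨`. -/
def fracLapHalf (n : ℕ) (φ : Eucl n → ℝ) (x : Eucl n) : ℝ :=
  (𝓕⁻ (fun ξ : Eucl n => ((2 * Real.pi * ‖ξ‖ : ℝ) : ℂ)
      * 𝓕 (fun y : Eucl n => ((φ y : ℝ) : ℂ)) ξ) x).re


/-- The Fourier transform of `⟪f, v⟫`. -/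
def auxF (n : ℕ) (f : Eucl n → Eucl n) (v ξ : Eucl n) : ℂ :=
  𝓕 (fun x : Eucl n => ((⟪f x, v⟫ : ℝ) : ℂ)) ξ

lemma auxF_eq (n : ℕ) (f : Eucl n → Eucl n) (v ξ : Eucl n) :
    auxF n f v ξ = ∫ x, Real.fourierChar (-⟪x, ξ⟫) • ((⟪f x, v⟫ : ℝ) : ℂ) := rfl

lemma aux_int (n : ℕ) (f : Eucl n → Eucl n) (hint : Integrable f volume) (v : Eucl n) :
    Integrable (fun x : Eucl n => ((⟪f x, v⟫ : ℝ) : ℂ)) volume :=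
  (hint.inner_const v).ofReal

lemma aux_int' (n : ℕ) (f : Eucl n → Eucl n) (hint : Integrable f volume) (v ξ : Eucl n) :
    Integrable (fun x : Eucl n => Real.fourierChar (-⟪x, ξ⟫) • ((⟪f x, v⟫ : ℝ) : ℂ)) volume :=
  (Real.fourierIntegral_convergent_iff ξ).2 (aux_int n f hint v)

lemma auxF_add (n : ℕ) (f : Eucl n → Eucl n) (hint : Integrable f volume) (v w ξ : Eucl n) :
    auxF n f (v + w) ξ = auxF n f v ξ + auxF n f w ξ := by
  simp only [auxF_eq]
  rw [← integral_add (aux_int' n f hint v ξ) (aux_int' n f hint w ξ)]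
  congr 1; ext x
  rw [inner_add_right, Complex.ofReal_add, smul_add]

lemma auxF_smul (n : ℕ) (f : Eucl n → Eucl n) (c : ℝ) (v ξ : Eucl n) :
    auxF n f (c • v) ξ = (c : ℂ) * auxF n f v ξ := by
  simp only [auxF_eq]
  rw [← integral_const_mul]
  congr 1; ext x
  rw [real_inner_smul_right, Complex.ofReal_mul, mul_smul_comm]

lemma auxF_rot (n : ℕ) (f : Eucl n → Eucl n) (g : ℝ → ℝ)
    (hform : ∀ x : Eucl n, f x = (g ‖x‖ / ‖x‖) • x) (A : Eucl n ≃ₗᵢ[ℝ] Eucl n)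
    (v ξ : Eucl n) : auxF n f (A v) (A ξ) = auxF n f v ξ := by
  simp only [auxF_eq]
  rw [← A.measurePreserving.integral_comp A.toHomeomorph.measurableEmbedding]
  congr 1; ext x
  have : f (A x) = A (f x) := by simp [hform]
  rw [this, A.inner_map_map, A.inner_map_map]

lemma auxF_neg (n : ℕ) (f : Eucl n → Eucl n) (v ξ : Eucl n) :
    auxF n f (-v) ξ = - auxF n f v ξ := by
  have := auxF_smul n f (-1) v ξ
  simpa using this

lemma auxF_odd (n : ℕ) (f : Eucl n → Eucl n) (g : ℝ → ℝ)
    (hform : ∀ x : Eucl n, f x = (g ‖x‖ / ‖x‖) • x) (v ξ : Eucl n) :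
    auxF n f v (-ξ) = - auxF n f v ξ := by
  have := auxF_rot n f g hform (LinearIsometryEquiv.neg ℝ) v ξ
  simp only [LinearIsometryEquiv.coe_neg] at this
  rw [auxF_neg] at this
  rw [← this, neg_neg]

lemma auxF_conj (n : ℕ) (f : Eucl n → Eucl n) (v ξ : Eucl n) :
    auxF n f v (-ξ) = (starRingEnd ℂ) (auxF n f v ξ) := by
  simp only [auxF_eq]
  rw [← integral_conj]
  congr 1; ext x
  simp only [Circle.smul_def, smul_eq_mul, map_mul, Complex.conj_ofReal, inner_neg_right]
  rw [AddChar.map_neg_eq_inv, Circle.coe_inv_eq_conj]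

lemma auxF_imag (n : ℕ) (f : Eucl n → Eucl n) (g : ℝ → ℝ)
    (hform : ∀ x : Eucl n, f x = (g ‖x‖ / ‖x‖) • x) (v ξ : Eucl n) :
    auxF n f v ξ = Complex.I * ((auxF n f v ξ).im : ℂ) := by
  have h := (auxF_conj n f v ξ).symm.trans (auxF_odd n f g hform v ξ)
  have h1 := congrArg Complex.re h
  simp only [Complex.conj_re, Complex.neg_re] at h1
  apply Complex.ext
  · simp; linarith
  · simp

lemma auxF_orth (n : ℕ) (f : Eucl n → Eucl n) (g : ℝ → ℝ)
    (hform : ∀ x : Eucl n, f x = (g ‖x‖ / ‖x‖) • x) (v ξ : Eucl n) (hv : ⟪v, ξ⟫ = 0) :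
    auxF n f v ξ = 0 := by
  have h := auxF_rot n f g hform (Submodule.reflection (Submodule.span ℝ {v})ᗮ) v ξ
  rw [Submodule.reflection_orthogonalComplement_singleton_eq_neg,
    Submodule.reflection_mem_subspace_eq_self
      (Submodule.mem_orthogonal_singleton_iff_inner_right.2 hv), auxF_neg] at h
  exact self_eq_neg.1 h.symm

lemma auxF_cont (n : ℕ) (f : Eucl n → Eucl n) (hint : Integrable f volume) (v : Eucl n) :
    Continuous (auxF n f v) :=
  VectorFourier.fourierIntegral_continuous Real.continuous_fourierChar
    (L := innerₗ (Eucl n)) continuous_inner (aux_int n f hint v)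

/-- If `f ∈ L¹(ℝⁿ,ℝⁿ)` has the form `f(x) = (x/|x|) g(|x|)`, then there is a
continuous `h : [0,∞) → ℝ` with `h(0) = 0`, `h(t) → 0` as `t → ∞`, such that
`f̂(ξ) = i (ξ/|ξ|) h(|ξ|)` for all `ξ`. -/
theorem fourier_transform_odd_radial (n : ℕ) (hn : 0 < n) (f : Eucl n → Eucl n) (g : ℝ → ℝ)
    (hint : Integrable f volume) (hform : ∀ x : Eucl n, f x = (g ‖x‖ / ‖x‖) • x) :
    ∃ h : ℝ → ℝ, ContinuousOn h (Ici 0) ∧ h 0 = 0 ∧ Tendsto h atTop (nhds 0) ∧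
      ∀ (ξ : Eucl n) (j : Fin n),
        𝓕 (fun x : Eucl n => ((f x j : ℝ) : ℂ)) ξ
          = Complex.I * ((ξ j / ‖ξ‖ : ℝ) : ℂ) * ((h ‖ξ‖ : ℝ) : ℂ) := by
  set e : Eucl n := EuclideanSpace.single (⟨0, hn⟩ : Fin n) (1 : ℝ) with he
  have hen : ‖e‖ = 1 := by simp [he]
  have hzero : ∀ v, auxF n f v 0 = 0 := fun v => auxF_orth n f g hform v 0 (by simp)
  refine ⟨fun t => (auxF n f e (t • e)).im, ?_, ?_, ?_, ?_⟩
  · exact (Complex.continuous_im.comp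
      ((auxF_cont n f hint e).comp (by fun_prop))).continuousOn
  · simp [hzero]
  · have h1 : Tendsto (auxF n f e) (cocompact (Eucl n)) (𝓝 0) :=
      tendsto_integral_exp_inner_smul_cocompact _
    have h2 : Tendsto (fun t : ℝ => t • e) atTop (cocompact (Eucl n)) := by
      rw [← Metric.cobounded_eq_cocompact, ← tendsto_norm_atTop_iff_cobounded]
      simp only [norm_smul, hen, mul_one]
      exact tendsto_norm_atTop_atTop
    have h3 := (Complex.continuous_im.tendsto 0).comp (h1.comp h2)
    simpa using! h3
  · intro ξ j
    have hj : 𝓕 (fun x : Eucl n => ((f x j : ℝ) : ℂ)) ξ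
        = auxF n f (EuclideanSpace.single j (1 : ℝ)) ξ := by
      have hfun : (fun x : Eucl n => ((f x j : ℝ) : ℂ))
          = fun x : Eucl n => ((⟪f x, EuclideanSpace.single j (1 : ℝ)⟫ : ℝ) : ℂ) := by
        funext x
        simp [EuclideanSpace.inner_single_right]
      rw [hfun, auxF]
    rw [hj]
    by_cases hξ : ξ = 0
    · subst hξ
      simp [hzero]
    have hn0 : ‖ξ‖ ≠ 0 := norm_ne_zero_iff.2 hξ
    set u : Eucl n := ‖ξ‖⁻¹ • ξ with hu
    have hun : ‖u‖ = 1 := by simp [hu, norm_smul, hn0]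
    have hrot : auxF n f e (‖ξ‖ • e) = auxF n f u ξ := by
      have h := auxF_rot n f g hform (Submodule.reflection (Submodule.span ℝ {e - u})ᗮ)
        e (‖ξ‖ • e)
      rw [map_smul, Submodule.reflection_sub (hen.trans hun.symm)] at h
      rw [← h, hu, smul_inv_smul₀ hn0]
    have hdec : (EuclideanSpace.single j (1 : ℝ) : Eucl n)
        = (ξ j / ‖ξ‖) • u + (EuclideanSpace.single j (1 : ℝ) - (ξ j / ‖ξ‖) • u) := by abel
    have horth : ⟪EuclideanSpace.single j (1 : ℝ) - (ξ j / ‖ξ‖) • u, ξ⟫ = 0 := by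
      rw [inner_sub_left, real_inner_smul_left, hu, real_inner_smul_left,
        real_inner_self_eq_norm_sq, EuclideanSpace.inner_single_left]
      simp
      field_simp
      simp
    rw [hdec, auxF_add n f hint, auxF_orth n f g hform _ ξ horth, auxF_smul, ← hrot, add_zero]
    conv_lhs => rw [auxF_imag n f g hform]
    ring

end
end

section
/- If m : ℝⁿ \ {0} → ℝⁿ is a measurable function that is homogeneous of degree 0 (i.e., m(tx) = m(x) for all t > 0 and x ≠ 0) and commutes with orthogonal transformations (i.e., m(ρ(x)) = ρ(m(x)) for every ρ ∈ O(n) and every x ≠ 0), then there is a constant C ∈ ℝ such that m(x) = C x/|x| for all x ≠ 0. -/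
open MeasureTheory Metric Filter Set
open scoped ENNReal NNReal RealInnerProductSpace FourierTransform Topology

noncomputable section

/-- If `m : ℝⁿ \ {0} → ℝⁿ` is measurable, homogeneous of degree `0`, and
commutes with orthogonal transformations, then `m(x) = C x/|x|` for some constant `C ∈ ℝ`. -/
theorem homogeneous_equivariant_eq_const_smul (n : ℕ) (hn : 0 < n) (m : Eucl n → Eucl n)
    (hmeas : Measurable m)
    (hhom : ∀ t : ℝ, 0 < t → ∀ x : Eucl n, x ≠ 0 → m (t • x) = m x)
    (hequiv : ∀ (ρ : Eucl n ≃ₗᵢ[ℝ] Eucl n) (x : Eucl n), x ≠ 0 → m (ρ x) = ρ (m x)) :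
    ∃ C : ℝ, ∀ x : Eucl n, x ≠ 0 → m x = (C * ‖x‖⁻¹) • x := by
  obtain ⟨e, he⟩ : ∃ e : Eucl n, ‖e‖ = 1 := ⟨EuclideanSpace.single ⟨0, hn⟩ 1, by simp⟩
  have he0 : e ≠ 0 := by
    intro h
    simp [h] at he
  -- the reflection in the line through `e` fixes `e`, hence fixes `m e`
  have h1 := hequiv (Submodule.reflection (Submodule.span ℝ {e})) e he0
  rw [Submodule.reflection_mem_subspace_eq_self (Submodule.mem_span_singleton_self e)] at h1
  have h2 : m e ∈ Submodule.span ℝ {e} := (Submodule.reflection_eq_self_iff (m e)).mp h1.symm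
  obtain ⟨C, hC⟩ := Submodule.mem_span_singleton.mp h2
  refine ⟨C, fun x hx => ?_⟩
  have hxn : 0 < ‖x‖ := norm_pos_iff.mpr hx
  have hnorm : ‖e‖ = ‖‖x‖⁻¹ • x‖ := by
    rw [he, norm_smul, norm_inv, norm_norm, inv_mul_cancel₀ hxn.ne']
  -- a reflection takes `e` to `x / ‖x‖`
  have h3 := hequiv (Submodule.reflection (Submodule.span ℝ {e - ‖x‖⁻¹ • x})ᗮ) e he0
  rw [← hC, map_smul, Submodule.reflection_sub hnorm, hhom _ (inv_pos.mpr hxn) x hx] at h3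
  rw [h3, smul_smul]

end
end
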